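/- Suppose the feasible set F is nonempty, R_o(μ) ≤ R_m for all μ ∈ P, and ε > 0. If μ̄ ∈ P is an ε-optimal policy for the bounded sup-inf problem, i.e. l*_B ≤ inf_{λ ∈ Λ_B} L(μ̄, λ) + ε, then with ε^f := (R_m − R* + ε)/B the following hold: (i) R_o(μ̄) ≥ R* − ε; (ii) R_c(μ̄) ≥ ρ − ε^f; (iii) R_f(μ̄) ≥ 1 − δ − ε^f. -/

import Mathlib

/-!
Weak duality carries the argument. The infimum of `L μ` over `ΛB` is at least `Ro μ` when `μ` is
feasible, so `Rstar ≤ lB`; hence `Rstar ≤ L μbar lam + ε` for every `lam ∈ ΛB`. The three claims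
are this inequality at the vertices `(0, 0)`, `(B, 0)` and `(0, B)` of the triangle `ΛB`, with
`Ro μbar ≤ Rm` used at the last two.
-/

/-- **Lemma 1 (ε-optimal policies for the bounded sup-inf problem).**
If the feasible set `F` is nonempty, `Ro μ ≤ Rm` for all policies `μ`, `ε > 0`, and
`μbar` is an `ε`-optimal policy for the bounded sup-inf problem
`l*_B = sup_μ inf_{λ ∈ Λ_B} L(μ, λ)`, then `μbar` is `ε`-optimal in objective reward
and `(Rm − R* + ε)/B`-feasible in both constraints. -/
theorem lemma_eps_opt
    {P : Type*} [Nonempty P]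
    (Ro Rc Rf : P → ℝ) (ρ δ B Rm : ℝ) (hB : 0 < B)
    (L : P → ℝ × ℝ → ℝ)
    (hL : ∀ μ lam, L μ lam = Ro μ + lam.1 * (Rc μ - ρ) + lam.2 * (Rf μ - (1 - δ)))
    (ΛB : Set (ℝ × ℝ))
    (hΛB : ΛB = {lam : ℝ × ℝ | 0 ≤ lam.1 ∧ 0 ≤ lam.2 ∧ lam.1 + lam.2 ≤ B})
    (F : Set P) (hF : F = {μ | ρ ≤ Rc μ ∧ 1 - δ ≤ Rf μ})
    (hFne : F.Nonempty)
    (hRm : ∀ μ, Ro μ ≤ Rm)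
    (Rstar : ℝ) (hRstar : Rstar = sSup (Ro '' F))
    (lB : ℝ) (hlB : lB = ⨆ μ : P, ⨅ lam : ΛB, L μ (lam : ℝ × ℝ))
    (ε : ℝ) (hε : 0 < ε)
    (μbar : P)
    (hopt : lB ≤ (⨅ lam : ΛB, L μbar (lam : ℝ × ℝ)) + ε) :
    Ro μbar ≥ Rstar - ε ∧
    Rc μbar ≥ ρ - (Rm - Rstar + ε) / B ∧
    Rf μbar ≥ 1 - δ - (Rm - Rstar + ε) / B := by
  have memΛ : ∀ a b : ℝ, 0 ≤ a → 0 ≤ b → a + b ≤ B → (a, b) ∈ ΛB := by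
    intro a b ha hb hab
    rw [hΛB]
    exact ⟨ha, hb, hab⟩
  have h00 := memΛ 0 0 le_rfl le_rfl (by linarith)
  haveI : Nonempty ΛB := ⟨⟨_, h00⟩⟩
  -- Boundedness below is needed for the real-valued infimum not to be a junk value.
  have hbdd : ∀ μ, BddBelow (Set.range fun lam : ΛB => L μ (lam : ℝ × ℝ)) := by
    intro μ
    refine ⟨Ro μ - B * |Rc μ - ρ| - B * |Rf μ - (1 - δ)|, ?_⟩
    rintro _ ⟨⟨⟨a, b⟩, hlam⟩, rfl⟩
    rw [hΛB] at hlam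
    obtain ⟨ha, hb, hab⟩ := hlam
    simp only at ha hb hab
    simp only [hL]
    have key : ∀ t x : ℝ, 0 ≤ t → t ≤ B → -(B * |x|) ≤ t * x := by
      intro t x ht htB
      have h1 := mul_le_mul_of_nonneg_left (neg_abs_le x) ht
      have h2 := mul_le_mul_of_nonneg_right htB (abs_nonneg x)
      linarith
    linarith [key a (Rc μ - ρ) ha (by linarith), key b (Rf μ - (1 - δ)) hb (by linarith)]
  have hinf : ∀ μ, ∀ lam ∈ ΛB, (⨅ l : ΛB, L μ (l : ℝ × ℝ)) ≤ L μ lam :=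
    fun μ lam hlam => ciInf_le (hbdd μ) ⟨lam, hlam⟩
  have hsup : BddAbove (Set.range fun μ : P => ⨅ l : ΛB, L μ (l : ℝ × ℝ)) := by
    refine ⟨Rm, ?_⟩
    rintro _ ⟨μ, rfl⟩
    have h := hinf μ _ h00
    simp only [hL μ (0, 0)] at h
    linarith [hRm μ]
  have hweak : Rstar ≤ lB := by
    rw [hRstar]
    refine csSup_le (hFne.image _) ?_
    rintro _ ⟨μ, hμ, rfl⟩
    rw [hF] at hμ
    obtain ⟨hc, hf⟩ := hμ
    rw [hlB]
    refine le_trans (le_ciInf ?_) (le_ciSup hsup μ)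
    rintro ⟨⟨a, b⟩, hlam⟩
    rw [hΛB] at hlam
    obtain ⟨ha, hb, -⟩ := hlam
    simp only at ha hb
    simp only [hL]
    linarith [mul_nonneg ha (sub_nonneg.2 hc), mul_nonneg hb (sub_nonneg.2 hf)]
  have hmain : ∀ lam ∈ ΛB, Rstar ≤ L μbar lam + ε := by
    intro lam hlam
    linarith [hinf μbar lam hlam]
  have h0 := hmain _ h00
  have h1 := hmain _ (memΛ B 0 hB.le le_rfl (by linarith))
  have h2 := hmain _ (memΛ 0 B le_rfl hB.le (by linarith))
  simp only [hL] at h0 h1 h2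
  have hm := hRm μbar
  have hdiv : ∀ x y : ℝ, Rstar ≤ Rm + B * (x - y) + ε → x ≥ y - (Rm - Rstar + ε) / B := by
    intro x y h
    have : y - x ≤ (Rm - Rstar + ε) / B := by
      rw [le_div_iff₀ hB]
      linarith
    linarith
  exact ⟨by linarith, hdiv _ _ (by linarith), hdiv _ _ (by linarith)⟩
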